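/- Let t ≥ 1 be an integer, let G be an ordered graph on n ≥ 2 vertices, let a > 0 be a real number, and let e ∈ E(G) be an edge with height h(e,G) > a. Then there is an increasing path P in G starting with the edge e, having length at least a^{1−1/t}/(70 log₂ n)^{2t}, and such that every edge f of P satisfies h(f,G) ≥ h(e,G) − a. -/

import Mathlib

open scoped Classical

namespace EO

/-- Auxiliary choice function for building the height table: given the list `prev` of the
(optional) entries at all earlier scanning positions, `htPick N G w k prev` is the entry at
scanning position `k`, namely the `w`-largest edge of `G` containing the column vertex
`⟨k % N⟩` of position `k` that does not occur among the earlier entries, if any exists. -/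
noncomputable def htPick (N : ℕ) (G : SimpleGraph (Fin N)) (w : Sym2 (Fin N) → ℕ)
    (k : ℕ) (prev : List (Option (Sym2 (Fin N)))) : Option (Sym2 (Fin N)) :=
  if hN : 0 < N then
    if h : ∃ e, (e ∈ G.edgeSet ∧ (⟨k % N, Nat.mod_lt k hN⟩ : Fin N) ∈ e ∧
          some e ∉ prev) ∧
        ∀ f, (f ∈ G.edgeSet ∧ (⟨k % N, Nat.mod_lt k hN⟩ : Fin N) ∈ f ∧
          some f ∉ prev) → w f ≤ w e
    then some h.choose else none
  else none

/-- The list of the first `k` entries of the height table of the ordered graph `G`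
(vertex set `Fin N` with its natural vertex order, edge order given by the injective
weight `w`).  Scanning position `k` corresponds to row `k / N + 1` and column `⟨k % N⟩`,
so scanning positions in increasing order of `k` is exactly scanning the table in
increasing lexicographic order (row first, then vertex order within a row). -/
noncomputable def htList (N : ℕ) (G : SimpleGraph (Fin N)) (w : Sym2 (Fin N) → ℕ) :
    ℕ → List (Option (Sym2 (Fin N)))
  | 0 => []
  | k + 1 => htList N G w k ++ [htPick N G w k (htList N G w k)]

/-- The entry of the height table of `G` at scanning position `k`: the `w`-largest
not-yet-entered edge containing the column vertex of position `k`, if any. -/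
noncomputable def htEntry (N : ℕ) (G : SimpleGraph (Fin N)) (w : Sym2 (Fin N) → ℕ)
    (k : ℕ) : Option (Sym2 (Fin N)) :=
  htPick N G w k (htList N G w k)

/-- The scanning index at which the edge `e` is entered into the height table
(junk value `0` if `e` is never entered; every edge of `G` is in fact entered exactly
once).  The lexicographic order on table positions corresponds exactly to the order of
scanning indices. -/
noncomputable def htIndex (N : ℕ) (G : SimpleGraph (Fin N)) (w : Sym2 (Fin N) → ℕ)
    (e : Sym2 (Fin N)) : ℕ :=
  if h : ∃ k, htEntry N G w k = some e then Nat.find h else 0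

/-- The height (row, `1`-indexed) of the edge `e` in the height table of `G`. -/
noncomputable def height (N : ℕ) (G : SimpleGraph (Fin N)) (w : Sym2 (Fin N) → ℕ)
    (e : Sym2 (Fin N)) : ℕ :=
  htIndex N G w e / N + 1

/-- The index of the column (vertex) of the edge `e` in the height table of `G`. -/
noncomputable def col (N : ℕ) (G : SimpleGraph (Fin N)) (w : Sym2 (Fin N) → ℕ)
    (e : Sym2 (Fin N)) : ℕ :=
  htIndex N G w e % N

/-- The column vertex of the edge `e` in the height table of `G` (for `N > 0`). -/
noncomputable def colV (N : ℕ) (hN : 0 < N) (G : SimpleGraph (Fin N))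
    (w : Sym2 (Fin N) → ℕ) (e : Sym2 (Fin N)) : Fin N :=
  ⟨htIndex N G w e % N, Nat.mod_lt _ hN⟩

/-- A list of edges is increasing (with respect to the edge order given by `w`) if
consecutive entries are strictly increasing. -/
def Increasing {V : Type*} (w : Sym2 V → ℕ) (l : List (Sym2 V)) : Prop :=
  l.Chain' fun a b => w a < w b

end EO

/-!
In the column of an end of `e`, all positions above `e` are filled with edges heavier than `e`, so a
path climbing the table is increasing. Climbing greedily costs about `D` rows per edge for a path of
length `D`, which gives length about `√a`. The exponent is improved by induction on `t`. Suppose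
that in every subgraph height `B` forces an increasing path of length `l`. From the current end of
the path, search breadth-first, each round using about `B` new rows. Within `log₂ n` rounds some
round fails to double the set of reached vertices; its edges then have average degree so large that
one of them has height at least `B` in the subgraph they form, and hence starts an increasing path
`Q` of length `l` in it. The search path `P` to `Q` has at most `log₂ n` edges, all lighter than
those of `Q`, so `P` cuts `Q` into few pieces and one can switch from `P` to a piece of length about
`l / log₂ n`. This gains `l / log₂ n` edges for about `B log₂ n` rows, and repeating it
`A / log₂ n` times replaces `(B, l)` by `(A B, A l)` up to the factor `(log₂ n)²`. Taking
`A = a^(1/t)` yields the theorem.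
-/

namespace EO

open SimpleGraph

section IncreasingPath

variable {V α : Type*} {G : SimpleGraph V}

theorem exists_isSubwalk_of_mem_head {u v x : V} {P : G.Walk u v} {e : Sym2 V}
    (hhead : P.edges.head? = some e) (hx : x ∈ e) :
    ∃ Q : G.Walk x v, Q.IsSubwalk P ∧ P.length ≤ Q.length + 1 := by
  cases P with
  | nil => simp at hhead
  | cons huv P =>
    obtain rfl : s(u, _) = e := by simpa using hhead
    obtain rfl | rfl := Sym2.mem_iff.1 hx
    · exact ⟨_, (P.cons huv).isSubwalk_rfl, Nat.le_succ _⟩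
    · exact ⟨P, P.isSubwalk_cons huv, le_rfl⟩

variable [Preorder α] {w : Sym2 V → α}

theorem exists_heaviest_edge_of_pairwise_lt {u v : V} {P : G.Walk u v} {e : Sym2 V} (hu : u ∈ e)
    (hlt : (e :: P.edges).Pairwise (w · < w ·)) :
    ∃ e' ∈ e :: P.edges, v ∈ e' ∧ ∀ f ∈ e :: P.edges, w f ≤ w e' := by
  induction P generalizing e with
  | nil => exact ⟨e, by simp [hu]⟩
  | cons huv P ih =>
    obtain ⟨he, hlt⟩ := List.pairwise_cons.1 hlt
    obtain ⟨e', he', hve', hmax⟩ := ih (Sym2.mem_mk_right _ _) hlt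
    exact ⟨e', List.mem_cons_of_mem _ he', hve',
      List.forall_mem_cons.2 ⟨(he e' he').le, hmax⟩⟩

/-- A path along which the edge weights strictly increase. Unlike in `Increasing`, all pairs of
edges are compared, so that the property visibly passes to subwalks. -/
structure IsIncreasingPath (w : Sym2 V → α) {u v : V} (P : G.Walk u v) : Prop where
  isPath : P.IsPath
  pairwise_lt : P.edges.Pairwise (w · < w ·)

namespace IsIncreasingPath

theorem nil (u : V) : IsIncreasingPath w (.nil : G.Walk u u) :=
  ⟨.nil, by simp⟩

theorem cons {u v z : V} {P : G.Walk v z} (hP : IsIncreasingPath w P) (huv : G.Adj u v)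
    (hu : u ∉ P.support) (hlt : ∀ f ∈ P.edges, w s(u, v) < w f) :
    IsIncreasingPath w (P.cons huv) :=
  ⟨hP.isPath.cons hu, by simpa using ⟨hlt, hP.pairwise_lt⟩⟩

theorem of_isSubwalk {u v u' v' : V} {P : G.Walk u v} {Q : G.Walk u' v'}
    (hP : IsIncreasingPath w P) (hQP : Q.IsSubwalk P) : IsIncreasingPath w Q :=
  ⟨Walk.isPath_of_isSubwalk hQP hP.isPath, hP.pairwise_lt.sublist hQP.edges_isInfix.sublist⟩

theorem le_of_head {u v : V} {P : G.Walk u v} {e : Sym2 V} (hP : IsIncreasingPath w P)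
    (hhead : P.edges.head? = some e) : ∀ f ∈ P.edges, w e ≤ w f := by
  obtain ⟨l, hl⟩ := List.head?_eq_some_iff.1 hhead
  have hlt := hP.pairwise_lt
  rw [hl, List.pairwise_cons] at hlt
  rw [hl]
  exact List.forall_mem_cons.2 ⟨le_rfl, fun f hf => (hlt.1 f hf).le⟩

theorem append {u v z : V} {P : G.Walk u v} {Q : G.Walk v z} (hP : IsIncreasingPath w P)
    (hQ : IsIncreasingPath w Q) (hlt : ∀ f ∈ P.edges, ∀ g ∈ Q.edges, w f < w g)
    (hdisj : ∀ x ∈ P.support, x ∈ Q.support → x = v) : IsIncreasingPath w (P.append Q) := by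
  constructor
  · have hQnodup := hQ.isPath.support_nodup
    rw [← Q.cons_tail_support, List.nodup_cons] at hQnodup
    rw [Walk.isPath_def, Walk.support_append, List.nodup_append']
    refine ⟨hP.isPath.support_nodup, hQnodup.2, fun x hxP hxQ => hQnodup.1 ?_⟩
    have hxv : x = v := hdisj x hxP (List.mem_of_mem_tail hxQ)
    exact hxv ▸ hxQ
  · rw [Walk.edges_append, List.pairwise_append]
    exact ⟨hP.pairwise_lt, hQ.pairwise_lt, hlt⟩

end IsIncreasingPath

/-- `R` is an increasing path that starts where `Q` starts and is assembled from vertices and edges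
of `Q` and of the walk `P` leaving the endpoint of `Q`. -/
structure IsMerge (w : Sym2 V → α) {y v z z' : V} (Q : G.Walk y v) (P : G.Walk v z)
    (R : G.Walk y z') : Prop extends IsIncreasingPath w R where
  mem_support : ∀ x ∈ R.support, x ∈ Q.support ∨ x ∈ P.support
  mem_edges : ∀ f ∈ R.edges, f ∈ Q.edges ∨ f ∈ P.edges

theorem IsMerge.of_isSubwalk {y v z z' : V} {Q : G.Walk y v} {P : G.Walk v z} {R : G.Walk y z'}
    (hP : IsIncreasingPath w P) (hRP : R.IsSubwalk P) : IsMerge w Q P R where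
  toIsIncreasingPath := hP.of_isSubwalk hRP
  mem_support _ hx := .inr (hRP.support_subset hx)
  mem_edges _ hf := .inr (hRP.edges_subset hf)

theorem IsMerge.cons {x y v z z₁ z' : V} {hxy : G.Adj x y} {Q : G.Walk y v} {P : G.Walk v z}
    {A : G.Walk v z₁} {R : G.Walk y z'} (hR : IsMerge w Q A R)
    (hQ : IsIncreasingPath w (Q.cons hxy))
    (hlt : ∀ f ∈ (Q.cons hxy).edges, ∀ g ∈ P.edges, w f < w g) (hAP : A.IsSubwalk P)
    (hxA : x ∉ A.support) : IsMerge w (Q.cons hxy) P (R.cons hxy) where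
  toIsIncreasingPath := by
    have hxQ : x ∉ Q.support := ((Walk.cons_isPath_iff _ _).1 hQ.isPath).2
    have hltQ : ∀ f ∈ Q.edges, w s(x, y) < w f := (List.pairwise_cons.1 hQ.pairwise_lt).1
    refine hR.toIsIncreasingPath.cons hxy (fun hx => ?_) fun f hf => ?_
    · exact (hR.mem_support x hx).elim hxQ hxA
    · exact (hR.mem_edges f hf).elim (hltQ f) fun hfA => hlt _ (by simp) f (hAP.edges_subset hfA)
  mem_support := List.forall_mem_cons.2 ⟨.inl List.mem_cons_self, fun a ha =>
    (hR.mem_support a ha).imp (List.mem_cons_of_mem _) (hAP.support_subset ·)⟩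
  mem_edges := List.forall_mem_cons.2 ⟨.inl List.mem_cons_self, fun f hf =>
    (hR.mem_edges f hf).imp (List.mem_cons_of_mem _) (hAP.edges_subset ·)⟩

/-- The vertices of `Q` cut `P` into at most `Q.length + 1` pieces, and `R` follows `Q` up to the
start of a longest piece. -/
theorem IsIncreasingPath.exists_isMerge {y v z : V} {Q : G.Walk y v} {P : G.Walk v z}
    (hQ : IsIncreasingPath w Q) (hP : IsIncreasingPath w P)
    (hlt : ∀ f ∈ Q.edges, ∀ g ∈ P.edges, w f < w g) :
    ∃ (z' : V) (R : G.Walk y z'), IsMerge w Q P R ∧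
      P.length + 1 ≤ (R.length + 1) * (Q.length + 1) := by
  induction Q generalizing z with
  | nil => exact ⟨z, P, .of_isSubwalk hP P.isSubwalk_rfl, by simp⟩
  | @cons y y' v hadj Q ih =>
    have extend {z₁ : V} {A : G.Walk v z₁} (hAP : A.IsSubwalk P) (hyA : y ∉ A.support) :
        ∃ (z' : V) (R : G.Walk y z'), IsMerge w (Q.cons hadj) P R ∧
          A.length + 1 ≤ R.length * (Q.length + 1) := by
      obtain ⟨z', R, hR, hlen⟩ := ih (hQ.of_isSubwalk (Q.isSubwalk_cons hadj))
        (hP.of_isSubwalk hAP) fun f hf g hg => hlt f (by simp [hf]) g (hAP.edges_subset hg)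
      exact ⟨z', R.cons hadj, hR.cons hQ hlt hAP hyA, hlen⟩
    rw [Walk.length_cons]
    by_cases hyP : y ∈ P.support
    · set A := P.takeUntil y hyP
      set B := P.dropUntil y hyP
      have hAB : A.length + B.length = P.length := by
        rw [← Walk.length_append, P.take_spec hyP]
      have hB : IsMerge w (Q.cons hadj) P B := .of_isSubwalk hP (P.isSubwalk_dropUntil hyP)
      by_cases hA : A.Nil
      · exact ⟨z, B, hB, by nlinarith [Walk.length_eq_zero_iff.2 hA]⟩
      obtain ⟨z', R, hR, hlen⟩ := extend (A := A.dropLast)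
        (P.isSubwalk_takeUntil hyP).dropLast fun hy => by
          have hnodup := (hP.isPath.takeUntil hyP).support_nodup
          rw [← Walk.support_dropLast_concat hA] at hnodup
          exact List.disjoint_of_nodup_append hnodup hy (List.mem_singleton_self y)
      rw [Walk.length_dropLast_add_one hA] at hlen
      obtain hBR | hRB := le_total B.length R.length
      · exact ⟨z', R, hR, by nlinarith⟩
      · exact ⟨z, B, hB, by nlinarith⟩
    · obtain ⟨z', R, hR, hlen⟩ := extend P.isSubwalk_rfl hyP
      exact ⟨z', R, hR, by nlinarith⟩

/-- A walk that can follow the edge `e` in an increasing path whose earlier vertices form `U`: an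
increasing path that uses edges of `E` heavier than `e` and no vertex of `U`. -/
structure IsContinuation (w : Sym2 V → α) (E : Finset (Sym2 V)) (U : Finset V) (e : Sym2 V)
    {u v : V} (P : G.Walk u v) : Prop extends IsIncreasingPath w P where
  edges_mem : ∀ f ∈ P.edges, f ∈ E
  lt : ∀ f ∈ P.edges, w e < w f
  notMem : ∀ x ∈ P.support, x ∉ U

namespace IsContinuation

variable {E E' : Finset (Sym2 V)} {U U' : Finset V} {e e' : Sym2 V} {u v z : V}
  {P : G.Walk u v} {Q : G.Walk v z}

theorem nil (hu : u ∉ U) : IsContinuation w E U e (.nil : G.Walk u u) where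
  toIsIncreasingPath := .nil u
  edges_mem := by simp
  lt := by simp
  notMem := by simpa using hu

theorem mono (hP : IsContinuation w E U e P) (hE : E ⊆ E') : IsContinuation w E' U e P :=
  { hP with edges_mem := fun f hf => hE (hP.edges_mem f hf) }

theorem of_isSubwalk {u' v' : V} {P' : G.Walk u' v'} (hP : IsContinuation w E U e P)
    (hsub : P'.IsSubwalk P) : IsContinuation w E U e P' where
  toIsIncreasingPath := hP.toIsIncreasingPath.of_isSubwalk hsub
  edges_mem f hf := hP.edges_mem f (hsub.edges_subset hf)
  lt f hf := hP.lt f (hsub.edges_subset hf)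
  notMem x hx := hP.notMem x (hsub.support_subset hx)

theorem exists_heaviest_edge (hP : IsContinuation w E U e P) (hu : u ∈ e) :
    ∃ e' ∈ e :: P.edges, v ∈ e' ∧ ∀ f ∈ e :: P.edges, w f ≤ w e' :=
  exists_heaviest_edge_of_pairwise_lt hu (List.pairwise_cons.2 ⟨hP.lt, hP.pairwise_lt⟩)

theorem concat (hP : IsContinuation w E U e P) (hvz : G.Adj v z) (hvzE : s(v, z) ∈ E)
    (hlt : ∀ f ∈ e :: P.edges, w f < w s(v, z)) (hzU : z ∉ U) (hzP : z ∉ P.support) :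
    IsContinuation w E U e (P.concat hvz) := by
  obtain ⟨hlt_e, hlt_P⟩ := List.forall_mem_cons.1 hlt
  refine ⟨⟨hP.isPath.concat hzP hvz, ?_⟩, ?_, ?_, ?_⟩
  · simpa [Walk.edges_concat, List.pairwise_append] using ⟨hP.pairwise_lt, hlt_P⟩
  · simpa [Walk.edges_concat, or_imp, forall_and] using ⟨hP.edges_mem, hvzE⟩
  · simpa [Walk.edges_concat, or_imp, forall_and] using ⟨hP.lt, hlt_e⟩
  · simpa [Walk.support_concat, or_imp, forall_and] using ⟨hP.notMem, hzU⟩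

theorem append (hP : IsContinuation w E U e P) (hQ : IsContinuation w E U' e' Q)
    (hU' : U ∪ P.support.toFinset.erase v ⊆ U') (hmax : ∀ f ∈ e :: P.edges, w f ≤ w e') :
    IsContinuation w E U e (P.append Q) where
  toIsIncreasingPath := hP.toIsIncreasingPath.append hQ.toIsIncreasingPath
    (fun f hf g hg => (hmax f (List.mem_cons_of_mem _ hf)).trans_lt (hQ.lt g hg))
    fun x hxP hxQ => by
      by_contra hxv
      exact hQ.notMem x hxQ (hU' (by simp [hxP, hxv]))
  edges_mem f hf := by
    rw [Walk.edges_append, List.mem_append] at hf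
    exact hf.elim (hP.edges_mem f) (hQ.edges_mem f)
  lt f hf := by
    rw [Walk.edges_append, List.mem_append] at hf
    exact hf.elim (hP.lt f) fun hfQ => (hmax e List.mem_cons_self).trans_lt (hQ.lt f hfQ)
  notMem x hx := by
    rw [Walk.mem_support_append_iff] at hx
    exact hx.elim (hP.notMem x) fun hxQ hxU =>
      hQ.notMem x hxQ (hU' (Finset.mem_union_left _ hxU))

theorem exists_merge (hP : IsContinuation w E U e P) (hQ : IsIncreasingPath w Q)
    (hQE : ∀ f ∈ Q.edges, f ∈ E) (hlt : ∀ f ∈ e :: P.edges, ∀ g ∈ Q.edges, w f < w g)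
    (hQU : ∀ x ∈ Q.support, x ∉ U) :
    ∃ (z' : V) (R : G.Walk u z'), IsContinuation w E U e R ∧
      Q.length + 1 ≤ (R.length + 1) * (P.length + 1) := by
  obtain ⟨hlt_e, hlt_P⟩ := List.forall_mem_cons.1 hlt
  obtain ⟨z', R, hR, hlen⟩ := hP.toIsIncreasingPath.exists_isMerge hQ hlt_P
  exact ⟨z', R, ⟨hR.toIsIncreasingPath,
    fun f hf => (hR.mem_edges f hf).elim (hP.edges_mem f) (hQE f),
    fun f hf => (hR.mem_edges f hf).elim (hP.lt f) (hlt_e f),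
    fun x hx => (hR.mem_support x hx).elim (hP.notMem x) (hQU x)⟩, hlen⟩

end IsContinuation

end IncreasingPath

section HeightTable

variable {V α : Type*} [LT α] {w : Sym2 V → α} {E : Finset (Sym2 V)}

/-- An arrangement of the edges in `E` at distinct positions (row, column), the column of an edge
being one of its ends, that could arise from the scan defining the height table: for an end `v` of
`e`, each position in column `v` above the row of `e` is occupied by an edge heavier than `e`. Rows
are numbered from `0` and `row`, `col` take junk values outside `E`. -/
structure HeightTable (w : Sym2 V → α) (E : Finset (Sym2 V)) where
  row : Sym2 V → ℕ
  col : Sym2 V → V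
  col_mem : ∀ e ∈ E, col e ∈ e
  injOn : Set.InjOn (fun e => (row e, col e)) E
  exists_lt : ∀ e ∈ E, ∀ v ∈ e, ∀ i < row e, ∃ f ∈ E, row f = i ∧ col f = v ∧ w e < w f

namespace HeightTable

theorem lt_of_col_mem (T : HeightTable w E) {e f : Sym2 V} (he : e ∈ E) (hf : f ∈ E)
    (hcol : T.col f ∈ e) (hrow : T.row f < T.row e) : w e < w f := by
  obtain ⟨g, hg, hrow_eq, hcol_eq, hlt⟩ := T.exists_lt e he _ hcol _ hrow
  rwa [T.injOn hg hf (Prod.ext hrow_eq hcol_eq)] at hlt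

theorem exists_le_row_of_mul_card_lt (T : HeightTable w E) {X : Finset V}
    (hX : ∀ f ∈ E, ∀ x ∈ f, x ∈ X) {a : ℕ} (hcard : a * X.card < E.card) :
    ∃ f ∈ E, a ≤ T.row f := by
  by_contra! hrow
  have hle : E.card ≤ (Finset.range a ×ˢ X).card :=
    Finset.card_le_card_of_injOn _ (fun f hf => by
      simpa using ⟨hrow f hf, hX f hf _ (T.col_mem f hf)⟩) T.injOn
  rw [Finset.card_product, Finset.card_range] at hle
  omega

/-- The edges placed in row `b` or below. -/
noncomputable def rowsFrom (T : HeightTable w E) (b : ℕ) : Finset (Sym2 V) :=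
  {f ∈ E | b ≤ T.row f}

theorem mem_rowsFrom {T : HeightTable w E} {b : ℕ} {f : Sym2 V} :
    f ∈ T.rowsFrom b ↔ f ∈ E ∧ b ≤ T.row f :=
  Finset.mem_filter

theorem rowsFrom_anti (T : HeightTable w E) {b c : ℕ} (hbc : b ≤ c) :
    T.rowsFrom c ⊆ T.rowsFrom b := fun _ hf =>
  mem_rowsFrom.2 ⟨(mem_rowsFrom.1 hf).1, hbc.trans (mem_rowsFrom.1 hf).2⟩

/-- The height table obtained by deleting the first `b` rows. -/
noncomputable def dropRows (T : HeightTable w E) (b : ℕ) :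
    HeightTable w (T.rowsFrom b) where
  row f := T.row f - b
  col := T.col
  col_mem e he := T.col_mem e (mem_rowsFrom.1 he).1
  injOn := by
    intro f hf g hg hfg
    obtain ⟨hfE, hbf⟩ := mem_rowsFrom.1 hf
    obtain ⟨hgE, hbg⟩ := mem_rowsFrom.1 hg
    simp only [Prod.mk.injEq] at hfg
    exact T.injOn hfE hgE (Prod.ext (by dsimp; omega) hfg.2)
  exists_lt e he v hv i hi := by
    obtain ⟨f, hf, hrow, hcol, hlt⟩ :=
      T.exists_lt e (mem_rowsFrom.1 he).1 v hv (i + b) (by omega)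
    exact ⟨f, mem_rowsFrom.2 ⟨hf, by omega⟩, by omega, hcol, hlt⟩

/-- The edges in the `s` rows starting with row `b` that have no end in `U`. -/
noncomputable def window (T : HeightTable w E) (U : Finset V) (b s : ℕ) :
    Finset (Sym2 V) :=
  {f ∈ E | T.row f ∈ Finset.Ico b (b + s) ∧ ∀ x ∈ U, x ∉ f}

theorem mem_window {T : HeightTable w E} {U : Finset V} {b s : ℕ} {f : Sym2 V} :
    f ∈ T.window U b s ↔ f ∈ E ∧ (b ≤ T.row f ∧ T.row f < b + s) ∧ ∀ x ∈ U, x ∉ f := by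
  simp [window]

/-- Column `v` is full in these rows, and at most one edge of it goes to each vertex of `U`. -/
theorem le_card_window_col (T : HeightTable w E) {U : Finset V} {e : Sym2 V} {v : V}
    (he : e ∈ E) (hv : v ∈ e) (hvU : v ∉ U) {b s : ℕ} (hrow : b + s ≤ T.row e) :
    s ≤ U.card + {f ∈ T.window U b s | T.col f = v}.card := by
  have hfull : ∀ i ∈ Finset.Ico b (b + s), ∃ f ∈ E, T.row f = i ∧ T.col f = v := fun i hi => by
    obtain ⟨f, hf, hrow, hcol, -⟩ := T.exists_lt e he v hv i (by rw [Finset.mem_Ico] at hi; omega)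
    exact ⟨f, hf, hrow, hcol⟩
  have hsub : Finset.Ico b (b + s) ⊆
      (U.image (s(v, ·)) ∪ {f ∈ T.window U b s | T.col f = v}).image T.row := fun i hi => by
    obtain ⟨f, hf, rfl, rfl⟩ := hfull i hi
    refine Finset.mem_image_of_mem _ (Finset.mem_union.2 ?_)
    by_cases hU : ∀ x ∈ U, x ∉ f
    · exact .inr (Finset.mem_filter.2 ⟨mem_window.2 ⟨hf, Finset.mem_Ico.1 hi, hU⟩, rfl⟩)
    · push Not at hU
      obtain ⟨x, hx, hxf⟩ := hU
      have hne : T.col f ≠ x := fun h => hvU (h ▸ hx)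
      exact .inl (Finset.mem_image.2
        ⟨x, hx, ((Sym2.mem_and_mem_iff hne).1 ⟨T.col_mem f hf, hxf⟩).symm⟩)
  calc s = (Finset.Ico b (b + s)).card := by simp
    _ ≤ (U.image (s(v, ·)) ∪ {f ∈ T.window U b s | T.col f = v}).card :=
      (Finset.card_le_card hsub).trans Finset.card_image_le
    _ ≤ (U.image (s(v, ·))).card + {f ∈ T.window U b s | T.col f = v}.card :=
      Finset.card_union_le _ _
    _ ≤ U.card + {f ∈ T.window U b s | T.col f = v}.card := by
      gcongr
      exact Finset.card_image_le

theorem card_mul_le_card_window (T : HeightTable w E) {U X : Finset V} {b s d : ℕ}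
    (hX : ∀ v ∈ X, v ∉ U ∧ ∃ e ∈ E, v ∈ e ∧ b + s ≤ T.row e) (hs : U.card + d ≤ s) :
    X.card * d ≤ {f ∈ T.window U b s | T.col f ∈ X}.card := by
  have hmaps : Set.MapsTo T.col ({f ∈ T.window U b s | T.col f ∈ X} : Finset (Sym2 V)) X :=
    fun f hf => (Finset.mem_filter.1 hf).2
  rw [Finset.card_eq_sum_card_fiberwise hmaps, ← smul_eq_mul]
  refine Finset.card_nsmul_le_sum _ _ _ fun v hv => ?_
  obtain ⟨hvU, e, he, hve, hrow⟩ := hX v hv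
  have hcol : {f ∈ {f ∈ T.window U b s | T.col f ∈ X} | T.col f = v} =
      {f ∈ T.window U b s | T.col f = v} := by
    rw [Finset.filter_filter]
    exact Finset.filter_congr fun f _ => ⟨And.right, fun h => ⟨h ▸ hv, h⟩⟩
  have := T.le_card_window_col he hve hvU hrow
  rw [hcol]
  omega

/-- The height table obtained by placing an edge `e` lighter than all others at a free position
`(i, v)` such that the columns of both ends of `e` are full above row `i`. -/
noncomputable def insertLightest (T : HeightTable w E) (e : Sym2 V) (heE : e ∉ E)
    (hlt : ∀ f ∈ E, w e < w f) (i : ℕ) (v : V) (hve : v ∈ e)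
    (hfree : ∀ f ∈ E, T.row f = i → T.col f ≠ v)
    (hfull : ∀ x ∈ e, ∀ j < i, ∃ f ∈ E, T.row f = j ∧ T.col f = x) :
    HeightTable w (insert e E) where
  row := Function.update T.row e i
  col := Function.update T.col e v
  col_mem f hf := by
    obtain rfl | hf := Finset.mem_insert.1 hf
    · simpa using hve
    · simpa [ne_of_mem_of_not_mem hf heE] using T.col_mem f hf
  injOn := by
    have hne : ∀ f ∈ E, f ≠ e := fun f hf => ne_of_mem_of_not_mem hf heE
    rw [Finset.coe_insert, Set.injOn_insert (by simpa using heE)]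
    constructor
    · exact T.injOn.congr fun f hf => by simp [hne f hf]
    · rintro ⟨f, hf, hpos⟩
      simp only [Function.update_of_ne (hne f hf), Function.update_self, Prod.mk.injEq] at hpos
      exact hfree f hf hpos.1 hpos.2
  exists_lt f hf x hx j hj := by
    have hne : ∀ f ∈ E, f ≠ e := fun f hf => ne_of_mem_of_not_mem hf heE
    suffices h : ∃ g ∈ E, T.row g = j ∧ T.col g = x ∧ w f < w g by
      obtain ⟨g, hg, hpos⟩ := h
      exact ⟨g, Finset.mem_insert_of_mem hg, by simpa [hne g hg] using hpos⟩
    obtain rfl | hf := Finset.mem_insert.1 hf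
    · obtain ⟨g, hg, hrow, hcol⟩ := hfull x hx j (by simpa using hj)
      exact ⟨g, hg, hrow, hcol, hlt g hg⟩
    · exact T.exists_lt f hf x hx j (by simpa [hne f hf] using hj)

end HeightTable

theorem nonempty_heightTable {α : Type*} [LinearOrder α] {w : Sym2 V → α}
    (hw : Function.Injective w) (E : Finset (Sym2 V)) : Nonempty (HeightTable w E) := by
  induction E using Finset.induction_on_min_value w with
  | empty => exact ⟨⟨fun _ => 0, fun e => e.out.1, by simp, by simp, by simp⟩⟩
  | insert e E heE hmin ih =>
    obtain ⟨T⟩ := ih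
    have hlt : ∀ f ∈ E, w e < w f := fun f hf => (hmin f hf).lt_of_ne fun h => heE (hw h ▸ hf)
    have hfree : ∃ i, ∃ v ∈ e, ∀ f ∈ E, T.row f = i → T.col f ≠ v :=
      ⟨E.sup T.row + 1, e.out.1, e.out_fst_mem, fun f hf hrow =>
        absurd (Finset.le_sup (f := T.row) hf) (by omega)⟩
    obtain ⟨v, hve, hv⟩ := Nat.find_spec hfree
    refine ⟨T.insertLightest e heE hlt _ v hve hv fun x hx j hj => ?_⟩
    have := Nat.find_min hfree hj
    push Not at this
    exact this x hx

end HeightTable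

section HeightForcesPath

variable {V α : Type*} [Preorder α] {G : SimpleGraph V} {w : Sym2 V → α}
  {E : Finset (Sym2 V)}

/-- There is an increasing path of length at least `κ` with first edge `e` and all edges in `E`. -/
def StartsPath (G : SimpleGraph V) (w : Sym2 V → α) (E : Finset (Sym2 V)) (e : Sym2 V) (κ : ℕ) :
    Prop :=
  ∃ (u v : V) (P : G.Walk u v), IsIncreasingPath w P ∧ P.edges.head? = some e ∧
    (∀ f ∈ P.edges, f ∈ E) ∧ κ ≤ P.length

/-- In every subgraph of `G`, given by its edge set `E`, each edge at height at least `a` is the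
first edge of an increasing path of length at least `κ`. -/
def HeightForcesPath (G : SimpleGraph V) (w : Sym2 V → α) (a κ : ℕ) : Prop :=
  ∀ (E : Finset (Sym2 V)) (T : HeightTable w E), ↑E ⊆ G.edgeSet →
    ∀ e ∈ E, a ≤ T.row e → StartsPath G w E e κ

namespace HeightForcesPath

theorem mono {a a' κ κ' : ℕ} (h : HeightForcesPath G w a κ) (ha : a ≤ a') (hκ : κ' ≤ κ) :
    HeightForcesPath G w a' κ' := fun E T hE e he hrow =>
  let ⟨u, v, P, hP, hhead, hPE, hlen⟩ := h E T hE e he (ha.trans hrow)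
  ⟨u, v, P, hP, hhead, hPE, hκ.trans hlen⟩

/-- The rows above `T.row e - a` can be deleted before the path is found. -/
theorem exists_path_row_le_add {a κ : ℕ} (h : HeightForcesPath G w a κ) (T : HeightTable w E)
    (hE : ↑E ⊆ G.edgeSet) {e : Sym2 V} (he : e ∈ E) (hrow : a ≤ T.row e) :
    ∃ (u v : V) (P : G.Walk u v), IsIncreasingPath w P ∧ P.edges.head? = some e ∧
      κ ≤ P.length ∧ ∀ f ∈ P.edges, T.row e ≤ T.row f + a := by
  have he' : e ∈ T.rowsFrom (T.row e - a) := HeightTable.mem_rowsFrom.2 ⟨he, Nat.sub_le _ _⟩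
  have hsub : (T.rowsFrom (T.row e - a) : Set (Sym2 V)) ⊆ G.edgeSet := fun f hf =>
    hE (HeightTable.mem_rowsFrom.1 hf).1
  obtain ⟨u, v, P, hP, hhead, hPE, hlen⟩ := h _ (T.dropRows (T.row e - a)) hsub e he'
    (show a ≤ T.row e - (T.row e - a) by omega)
  exact ⟨u, v, P, hP, hhead, hlen, fun f hf => by
    have := (HeightTable.mem_rowsFrom.1 (hPE f hf)).2
    omega⟩

end HeightForcesPath

namespace HeightTable

theorem lt_of_isContinuation (T : HeightTable w E) {U : Finset V} {e f : Sym2 V} {b : ℕ} {y : V}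
    {P : G.Walk y (T.col f)} (hP : IsContinuation w (T.rowsFrom b) U e P)
    (he : e ∈ T.rowsFrom b) (hy : y ∈ e) (hf : f ∈ E) (hrow : T.row f < b) :
    ∀ g ∈ e :: P.edges, w g < w f := by
  obtain ⟨e', he', hcol, hmax⟩ := hP.exists_heaviest_edge hy
  have he'T := mem_rowsFrom.1 (List.forall_mem_cons.2 ⟨he, hP.edges_mem⟩ e' he')
  exact fun g hg => (hmax g hg).trans_lt (T.lt_of_col_mem he'T.1 hf hcol (hrow.trans_le he'T.2))

/-- A path that has arrived at a vertex `y` along an edge `e` in row `c` or below, having used the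
vertices of `U` before, can be continued by `q` edges inside the next `c` rows, as long as its
length stays bounded by `D`. -/
def Extendable (G : SimpleGraph V) (T : HeightTable w E) (D c q : ℕ) : Prop :=
  ∀ (U : Finset V) (e : Sym2 V) (y : V), e ∈ E → y ∈ e → y ∉ U → U.card + q ≤ D → c ≤ T.row e →
    ∃ (z : V) (P : G.Walk y z), IsContinuation w (T.rowsFrom (T.row e - c)) U e P ∧ P.length = q

theorem Extendable.iterate {T : HeightTable w E} {D c q : ℕ} (h : T.Extendable G D c q) (j : ℕ)
    {U : Finset V} {e : Sym2 V} {y : V} (he : e ∈ E) (hy : y ∈ e) (hyU : y ∉ U)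
    (hD : U.card + j * q ≤ D) (hrow : j * c ≤ T.row e) :
    ∃ (z : V) (P : G.Walk y z), IsContinuation w E U e P ∧ P.length = j * q := by
  induction j generalizing U e y with
  | zero => exact ⟨y, .nil, .nil hyU, by simp⟩
  | succ j ih =>
    rw [Nat.succ_mul] at hD hrow ⊢
    obtain ⟨z, P, hP, hPlen⟩ := h U e y he hy hyU (by omega) (by omega)
    obtain ⟨e', he', hz, hmax⟩ := hP.exists_heaviest_edge hy
    have he'T := mem_rowsFrom.1 (List.forall_mem_cons.2
      ⟨mem_rowsFrom.2 ⟨he, Nat.sub_le _ _⟩, hP.edges_mem⟩ e' he')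
    have hzU : z ∉ U ∪ P.support.toFinset.erase z := by simp [hP.notMem z P.end_mem_support]
    have hcard : (U ∪ P.support.toFinset.erase z).card ≤ U.card + q := by
      refine (Finset.card_union_le _ _).trans (Nat.add_le_add_left ?_ _)
      rw [Finset.card_erase_of_mem (by simp)]
      have := P.support.toFinset_card_le
      rw [Walk.length_support] at this
      omega
    obtain ⟨z', Q, hQ, hQlen⟩ := ih he'T.1 hz hzU (by omega) (by omega)
    refine ⟨z', P.append Q, (hP.mono (Finset.filter_subset _ _)).append hQ subset_rfl hmax, ?_⟩
    rw [Walk.length_append, hPlen, hQlen, add_comm]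

end HeightTable

theorem heightForcesPath_of_extendable {c q j : ℕ}
    (h : ∀ (E : Finset (Sym2 V)) (T : HeightTable w E), ↑E ⊆ G.edgeSet →
      T.Extendable G (j * q + 1) c q) : HeightForcesPath G w (j * c) (j * q + 1) := by
  intro E T hE e he hrow
  induction e with | h x y
  have hxy : G.Adj x y := hE he
  obtain ⟨z, P, hP, hlen⟩ := (h E T hE).iterate j (U := {x}) he (Sym2.mem_mk_right x y)
    (by simpa using hxy.ne') (by simp [add_comm]) hrow
  have hxP : x ∉ P.support := fun hx => hP.notMem x hx (Finset.mem_singleton_self x)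
  exact ⟨x, z, P.cons hxy, hP.toIsIncreasingPath.cons hxy hxP hP.lt, rfl,
    List.forall_mem_cons.2 ⟨he, hP.edges_mem⟩, by rw [Walk.length_cons, hlen]⟩

theorem HeightTable.extendable_one (T : HeightTable w E) (hE : ↑E ⊆ G.edgeSet) (D : ℕ) :
    T.Extendable G D D 1 := by
  intro U e y he hy hyU hD hrow
  have hpos : 0 < {f ∈ T.window U (T.row e - D) D | T.col f = y}.card := by
    have := T.le_card_window_col he hy hyU (Nat.sub_add_cancel hrow).le
    omega
  obtain ⟨f, hf⟩ := Finset.card_pos.1 hpos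
  obtain ⟨hfT, rfl⟩ := Finset.mem_filter.1 hf
  obtain ⟨hfE, hfrow, hfU⟩ := mem_window.1 hfT
  have hlt : w e < w f := T.lt_of_col_mem he hfE hy (by omega)
  obtain ⟨z, hz⟩ := T.col_mem f hfE
  have hadj : G.Adj (T.col f) z := by
    rw [← mem_edgeSet, ← hz]
    exact hE hfE
  refine ⟨z, Walk.nil.concat hadj, (IsContinuation.nil hyU).concat hadj ?_ ?_ ?_ ?_, rfl⟩
  · exact mem_rowsFrom.2 (hz ▸ ⟨hfE, hfrow.1⟩)
  · simpa [← hz] using hlt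
  · exact fun hzU => hfU z hzU (hz ▸ Sym2.mem_mk_right _ _)
  · simpa using hadj.ne'

theorem heightForcesPath_greedy (G : SimpleGraph V) (w : Sym2 V → α) (k : ℕ) :
    HeightForcesPath G w (k * (k + 1)) (k + 1) := by
  simpa using heightForcesPath_of_extendable (j := k) (q := 1) fun E (T : HeightTable w E) hE =>
    T.extendable_one hE (k * 1 + 1)

theorem heightForcesPath_of_le_one (G : SimpleGraph V) (w : Sym2 V → α) (a : ℕ) {κ : ℕ}
    (hκ : κ ≤ 1) : HeightForcesPath G w a κ :=
  (heightForcesPath_greedy G w 0).mono (by simp) hκ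

end HeightForcesPath

section Search

theorem exists_card_succ_lt_two_mul_card {V : Type*} [Fintype V] {X : ℕ → Finset V}
    (hX : (X 0).Nonempty) :
    ∃ r ≤ Nat.log 2 (Fintype.card V), (X (r + 1)).card < 2 * (X r).card := by
  by_contra! hdouble
  have hpow : ∀ r ≤ Nat.log 2 (Fintype.card V) + 1, 2 ^ r ≤ (X r).card := fun r hr => by
    induction r with
    | zero => exact hX.card_pos
    | succ r ih =>
      have := ih (by omega)
      have := hdouble r (by omega)
      rw [pow_succ]
      omega
  exact (Nat.lt_pow_succ_log_self one_lt_two (Fintype.card V)).not_ge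
    ((hpow _ le_rfl).trans (Finset.card_le_univ _))

theorem HeightForcesPath.exists_startsPath {V α : Type*} [LinearOrder α] {G : SimpleGraph V}
    {w : Sym2 V → α} {E : Finset (Sym2 V)} {a κ : ℕ} (h : HeightForcesPath G w a κ)
    (hw : Function.Injective w) (hE : ↑E ⊆ G.edgeSet) {X : Finset V} (hX : ∀ f ∈ E, ∀ x ∈ f, x ∈ X)
    (hcard : a * X.card < E.card) : ∃ f ∈ E, StartsPath G w E f κ := by
  obtain ⟨T⟩ := nonempty_heightTable hw E
  obtain ⟨f, hf, hrow⟩ := T.exists_le_row_of_mul_card_lt hX hcard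
  exact ⟨f, hf, h E T hE f hf hrow⟩

namespace HeightTable

variable {V α : Type*} [Fintype V] [Preorder α] {G : SimpleGraph V} {w : Sym2 V → α}
  {E : Finset (Sym2 V)}

/-- The vertices at which a path that has arrived at `y` along `e`, having used the vertices of `U`
before, can end after at most `r` further edges from the next `r * s` rows. -/
noncomputable def reach (G : SimpleGraph V) (T : HeightTable w E) (U : Finset V) (e : Sym2 V)
    (y : V) (s r : ℕ) : Finset V :=
  {v | ∃ P : G.Walk y v, IsContinuation w (T.rowsFrom (T.row e - r * s)) U e P ∧ P.length ≤ r}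

theorem mem_reach {T : HeightTable w E} {U : Finset V} {e : Sym2 V} {y v : V} {s r : ℕ} :
    v ∈ T.reach G U e y s r ↔ ∃ P : G.Walk y v,
      IsContinuation w (T.rowsFrom (T.row e - r * s)) U e P ∧ P.length ≤ r := by
  simp [reach]

/-- The edges avoiding `U` that extend the search for `T.reach G U e y s r` by one round, using the
columns of the reached vertices in `s` further rows. -/
noncomputable def reachEdges (G : SimpleGraph V) (T : HeightTable w E) (U : Finset V)
    (e : Sym2 V) (y : V) (s r : ℕ) : Finset (Sym2 V) :=
  {f ∈ T.window U (T.row e - (r + 1) * s) s | T.col f ∈ T.reach G U e y s r}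

variable (T : HeightTable w E) {U : Finset V} {e f : Sym2 V} {y x : V} {s r : ℕ}

theorem reachEdges_subset_rowsFrom :
    T.reachEdges G U e y s r ⊆ T.rowsFrom (T.row e - (r + 1) * s) := fun _ hf =>
  have hf := mem_window.1 (Finset.mem_filter.1 hf).1
  mem_rowsFrom.2 ⟨hf.1, hf.2.1.1⟩

theorem exists_isContinuation_lt_of_mem_reachEdges (he : e ∈ E) (hy : y ∈ e)
    (hrow : (r + 1) * s ≤ T.row e) (hf : f ∈ T.reachEdges G U e y s r) :
    ∃ P : G.Walk y (T.col f),
      IsContinuation w (T.rowsFrom (T.row e - (r + 1) * s)) U e P ∧ P.length ≤ r ∧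
      ∀ g ∈ e :: P.edges, w g < w f := by
  obtain ⟨hfT, hreach⟩ := Finset.mem_filter.1 hf
  obtain ⟨hfE, ⟨-, hfrow⟩, -⟩ := mem_window.1 hfT
  obtain ⟨P, hP, hlen⟩ := mem_reach.1 hreach
  rw [Nat.succ_mul] at hrow hfrow ⊢
  exact ⟨P, hP.mono (T.rowsFrom_anti (by omega)), hlen,
    T.lt_of_isContinuation hP (mem_rowsFrom.2 ⟨he, Nat.sub_le _ _⟩) hy hfE (by omega)⟩

theorem mem_reach_succ_of_mem_reachEdges (hE : ↑E ⊆ G.edgeSet) (he : e ∈ E) (hy : y ∈ e)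
    (hrow : (r + 1) * s ≤ T.row e) (hf : f ∈ T.reachEdges G U e y s r) (hx : x ∈ f) :
    x ∈ T.reach G U e y s (r + 1) := by
  obtain ⟨P, hP, hlen, hlt⟩ := T.exists_isContinuation_lt_of_mem_reachEdges he hy hrow hf
  have hfrow := T.reachEdges_subset_rowsFrom hf
  have hfE : f ∈ E := (mem_rowsFrom.1 hfrow).1
  refine mem_reach.2 ?_
  by_cases hxP : x ∈ P.support
  · exact ⟨P.takeUntil x hxP, hP.of_isSubwalk (P.isSubwalk_takeUntil hxP),
      (P.length_takeUntil_le_length hxP).trans (by omega)⟩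
  · have hne : T.col f ≠ x := fun h => hxP (h ▸ P.end_mem_support)
    have hf_eq : f = s(T.col f, x) := (Sym2.mem_and_mem_iff hne).1 ⟨T.col_mem f hfE, hx⟩
    have hadj : G.Adj (T.col f) x := by
      rw [← mem_edgeSet, ← hf_eq]
      exact hE hfE
    have hxU : x ∉ U := fun hxU =>
      (mem_window.1 (Finset.mem_filter.1 hf).1).2.2 x hxU hx
    exact ⟨P.concat hadj, hP.concat hadj (hf_eq ▸ hfrow) (hf_eq ▸ hlt) hxU hxP,
      by rw [Walk.length_concat]; omega⟩

theorem card_reach_mul_le_card_reachEdges (he : e ∈ E) (hy : y ∈ e)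
    (hrow : (r + 1) * s ≤ T.row e) {d : ℕ} (hd : U.card + d ≤ s) :
    (T.reach G U e y s r).card * d ≤ (T.reachEdges G U e y s r).card := by
  refine T.card_mul_le_card_window (fun v hv => ?_) hd
  obtain ⟨P, hP, -⟩ := mem_reach.1 hv
  obtain ⟨e', he', hv', -⟩ := hP.exists_heaviest_edge hy
  have he'T := mem_rowsFrom.1 (List.forall_mem_cons.2
    ⟨mem_rowsFrom.2 ⟨he, Nat.sub_le _ _⟩, hP.edges_mem⟩ e' he')
  rw [Nat.succ_mul] at hrow ⊢
  exact ⟨hP.notMem v P.end_mem_support, e', he'T.1, hv', by omega⟩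

theorem exists_isContinuation_of_startsPath (he : e ∈ E) (hy : y ∈ e)
    (hrow : (r + 1) * s ≤ T.row e) {q κ : ℕ} (hf : f ∈ T.reachEdges G U e y s r)
    (hpath : StartsPath G w (T.reachEdges G U e y s r) f κ) (hq : q * (r + 1) < κ) :
    ∃ (z : V) (P : G.Walk y z),
      IsContinuation w (T.rowsFrom (T.row e - (r + 1) * s)) U e P ∧ P.length = q := by
  obtain ⟨P, hP, hPlen, hPlt⟩ := T.exists_isContinuation_lt_of_mem_reachEdges he hy hrow hf
  obtain ⟨u, v, Q, hQ, hhead, hQedges, hQlen⟩ := hpath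
  have hcol : T.col f ∈ f :=
    T.col_mem f (mem_rowsFrom.1 (T.reachEdges_subset_rowsFrom hf)).1
  have hQnil : ¬Q.Nil := fun hnil => by simp [Walk.edges_eq_nil.2 hnil] at hhead
  have hQU : ∀ x ∈ Q.support, x ∉ U := fun x hx hxU => by
    obtain ⟨g, hg, hxg⟩ := (Walk.mem_support_iff_exists_mem_edges_of_not_nil hQnil).1 hx
    exact (mem_window.1 (Finset.mem_filter.1 (hQedges g hg)).1).2.2 x hxU hxg
  obtain ⟨Q', hQ'Q, hQ'len⟩ := exists_isSubwalk_of_mem_head hhead hcol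
  obtain ⟨z, R, hR, hRlen⟩ := hP.exists_merge (hQ.of_isSubwalk hQ'Q)
    (fun g hg => T.reachEdges_subset_rowsFrom (hQedges g (hQ'Q.edges_subset hg)))
    (fun g hg g' hg' => (hPlt g hg).trans_le (hQ.le_of_head hhead g' (hQ'Q.edges_subset hg')))
    fun x hx => hQU x (hQ'Q.support_subset hx)
  have hqR : q < R.length + 1 := by
    refine Nat.lt_of_mul_lt_mul_right (a := r + 1) ?_
    calc q * (r + 1) < Q'.length + 1 := by omega
      _ ≤ (R.length + 1) * (P.length + 1) := hRlen
      _ ≤ (R.length + 1) * (r + 1) := by gcongr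
  exact ⟨_, R.take q, hR.of_isSubwalk (R.isSubwalk_take q), by rw [R.take_length]; omega⟩

theorem extendable_of_heightForcesPath {α : Type*} [LinearOrder α] {w : Sym2 V → α}
    (hw : Function.Injective w) {a κ q : ℕ} (h : HeightForcesPath G w a κ) (ha : 0 < a)
    (hq : q * (Nat.log 2 (Fintype.card V) + 1) < κ) (T : HeightTable w E) (hE : ↑E ⊆ G.edgeSet)
    (D : ℕ) :
    T.Extendable G D ((Nat.log 2 (Fintype.card V) + 1) * (D + 2 * a)) q := by
  intro U e y he hy hyU hD hrow
  set s := D + 2 * a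
  have hy0 : y ∈ T.reach G U e y s 0 := mem_reach.2 ⟨.nil, .nil hyU, le_rfl⟩
  obtain ⟨r, hr, hXr⟩ := exists_card_succ_lt_two_mul_card (X := T.reach G U e y s) ⟨y, hy0⟩
  have hrs : (r + 1) * s ≤ (Nat.log 2 (Fintype.card V) + 1) * s := by gcongr
  replace hrow := hrs.trans hrow
  have hcard : a * (T.reach G U e y s (r + 1)).card < (T.reachEdges G U e y s r).card := by
    calc a * (T.reach G U e y s (r + 1)).card < a * (2 * (T.reach G U e y s r).card) := by gcongr
      _ = (T.reach G U e y s r).card * (2 * a) := by ring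
      _ ≤ (T.reachEdges G U e y s r).card :=
        T.card_reach_mul_le_card_reachEdges he hy hrow (by omega)
  obtain ⟨f, hf, hpath⟩ := h.exists_startsPath hw
    (fun f hf => hE (mem_rowsFrom.1 (T.reachEdges_subset_rowsFrom hf)).1)
    (fun f hf x hx => T.mem_reach_succ_of_mem_reachEdges hE he hy hrow hf hx) hcard
  obtain ⟨z, P, hP, hlen⟩ := T.exists_isContinuation_of_startsPath he hy hrow hf hpath
    (lt_of_le_of_lt (by gcongr) hq)
  exact ⟨z, P, hP.mono (T.rowsFrom_anti (by omega)), hlen⟩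

end HeightTable

end Search

section Amplification

theorem heightForcesPath_floor_sq {V α : Type*} [Preorder α] (G : SimpleGraph V) (w : Sym2 V → α)
    {A : ℝ} (hA : 0 ≤ A) : HeightForcesPath G w ⌊A ^ 2⌋₊ ⌊A⌋₊ := by
  refine (heightForcesPath_greedy G w (⌊A⌋₊ - 1)).mono (Nat.le_floor ?_) (by omega)
  have hfloor : (⌊A⌋₊ - 1) * (⌊A⌋₊ - 1 + 1) ≤ ⌊A⌋₊ ^ 2 := by
    rcases ⌊A⌋₊ with _ | k
    · simp
    · simp only [Nat.add_sub_cancel]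
      nlinarith
  calc (((⌊A⌋₊ - 1) * (⌊A⌋₊ - 1 + 1) : ℕ) : ℝ) ≤ (⌊A⌋₊ : ℝ) ^ 2 := mod_cast hfloor
    _ ≤ A ^ 2 := by
      gcongr
      exact Nat.floor_le hA

theorem heightForcesPath_of_mul_two_le_sq {V α : Type*} [Preorder α] (G : SimpleGraph V)
    (w : Sym2 V → α) {A B l L : ℝ} (hA : 1 ≤ A) (hAB : A ≤ B) (hL : 0 < L) (hl : l * 2 ≤ L ^ 2) :
    HeightForcesPath G w ⌊A * B⌋₊ ⌈A * l / L ^ 2⌉₊ := by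
  refine (heightForcesPath_floor_sq G w (by linarith : 0 ≤ A)).mono
    (Nat.floor_le_floor (by nlinarith)) (Nat.ceil_le.2 ?_)
  calc A * l / L ^ 2 ≤ A / 2 := by
        rw [div_le_div_iff₀ (by positivity) two_pos]
        nlinarith
    _ ≤ ⌊A⌋₊ := (Nat.div_two_lt_floor hA).le

variable {V α : Type*} [Fintype V] [LinearOrder α] {G : SimpleGraph V} {w : Sym2 V → α}

theorem HeightForcesPath.iterate_search {a κ q : ℕ} (h : HeightForcesPath G w a κ)
    (hw : Function.Injective w) (ha : 0 < a) (hq : q * (Nat.log 2 (Fintype.card V) + 1) < κ)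
    (j : ℕ) :
    HeightForcesPath G w
      (j * ((Nat.log 2 (Fintype.card V) + 1) * (j * q + 1 + 2 * a))) (j * q + 1) :=
  heightForcesPath_of_extendable fun _ T hE =>
    T.extendable_of_heightForcesPath hw h ha hq hE (j * q + 1)

theorem div_two_mul_le_floor_div {x y : ℝ} (hy : 0 < y) (hyx : y ≤ x) :
    x / (2 * y) ≤ ⌊x / y⌋₊ := by
  rw [mul_comm, ← div_div]
  exact (Nat.div_two_lt_floor ((one_le_div hy).2 hyx)).le

/-- The search is iterated `j ≈ A / (8Λ)` times, gaining `q ≈ l / (2Λ)` edges each time. -/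
theorem HeightForcesPath.mul_of_two_mul_log_le {A B l Λ : ℝ} (h : HeightForcesPath G w ⌊B⌋₊ ⌈l⌉₊)
    (hw : Function.Injective w) (hΛ : Λ = (Nat.log 2 (Fintype.card V) : ℝ) + 1)
    (hΛA : 8 * Λ ≤ A) (hΛl : 2 * Λ ≤ l) (hAB : A ≤ B) (hAlB : A * l ≤ B) :
    HeightForcesPath G w ⌊A * B⌋₊ ⌈A * l / (64 * Λ ^ 2)⌉₊ := by
  have hΛ1 : 1 ≤ Λ := by simp [hΛ]
  have hB : (⌊B⌋₊ : ℝ) ≤ B := Nat.floor_le (by linarith)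
  set q := ⌊l / (2 * Λ)⌋₊
  set j := ⌊A / (8 * Λ)⌋₊
  have hq_le : (q : ℝ) * (2 * Λ) ≤ l :=
    (le_div_iff₀ (by linarith)).1 (Nat.floor_le (div_nonneg (by linarith) (by linarith)))
  have hj_le : (j : ℝ) * (8 * Λ) ≤ A :=
    (le_div_iff₀ (by linarith)).1 (Nat.floor_le (div_nonneg (by linarith) (by linarith)))
  have hq : q * (Nat.log 2 (Fintype.card V) + 1) < ⌈l⌉₊ := by
    rw [Nat.lt_ceil]
    push_cast
    rw [← hΛ]
    linarith
  refine (h.iterate_search hw (Nat.floor_pos.2 (by linarith)) hq j).mono (Nat.le_floor ?_)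
    (Nat.ceil_le.2 ?_)
  · push_cast
    rw [← hΛ]
    have hjq : (j : ℝ) * q ≤ B := by
      calc (j : ℝ) * q ≤ A * l := by gcongr <;> nlinarith
        _ ≤ B := hAlB
    calc (j : ℝ) * (Λ * (j * q + 1 + 2 * ⌊B⌋₊)) = j * Λ * (j * q + 1 + 2 * ⌊B⌋₊) := by ring
      _ ≤ A / 8 * (B + B + 2 * B) := by gcongr <;> linarith
      _ ≤ A * B := by nlinarith
  · calc A * l / (64 * Λ ^ 2) = A / (2 * (8 * Λ)) * (l / (2 * (2 * Λ))) := by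
          field_simp
          ring
      _ ≤ j * q := mul_le_mul (div_two_mul_le_floor_div (by linarith) hΛA)
          (div_two_mul_le_floor_div (by linarith) hΛl)
          (div_nonneg (by linarith) (by linarith)) (Nat.cast_nonneg _)
      _ ≤ ((j * q + 1 : ℕ) : ℝ) := by
          push_cast
          linarith

theorem HeightForcesPath.amplify {A B l L : ℝ} (h : HeightForcesPath G w ⌊B⌋₊ ⌈l⌉₊)
    (hw : Function.Injective w) (hL : 8 * ((Nat.log 2 (Fintype.card V) : ℝ) + 1) ≤ L)
    (hLA : L ^ 2 ≤ A) (hAB : A ≤ B) (hAlB : A * l ≤ B) :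
    HeightForcesPath G w ⌊A * B⌋₊ ⌈A * l / L ^ 2⌉₊ := by
  set Λ : ℝ := (Nat.log 2 (Fintype.card V) : ℝ) + 1 with hΛ
  have hΛ1 : 1 ≤ Λ := by simp [hΛ]
  have hΛL : 64 * Λ ^ 2 ≤ L ^ 2 := by nlinarith [hΛ1]
  have hA : 0 < A := by nlinarith
  obtain hl | hl := lt_or_ge l (2 * Λ)
  · exact heightForcesPath_of_mul_two_le_sq G w (by nlinarith) hAB (by linarith) (by nlinarith)
  · refine (h.mul_of_two_mul_log_le hw hΛ (by nlinarith) hl hAB hAlB).mono le_rfl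
      (Nat.ceil_le_ceil ?_)
    gcongr
    exact mul_nonneg hA.le (by linarith)

theorem heightForcesPath_floor_pow (G : SimpleGraph V) (hw : Function.Injective w) {A L : ℝ}
    (hA : 0 < A) (hL : 8 * ((Nat.log 2 (Fintype.card V) : ℝ) + 1) ≤ L) (t : ℕ) :
    HeightForcesPath G w ⌊A ^ (t + 1)⌋₊ ⌈A ^ t / L ^ (2 * (t + 1))⌉₊ := by
  have hL1 : 1 ≤ L := by linarith [Nat.cast_nonneg (α := ℝ) (Nat.log 2 (Fintype.card V))]
  have hL0 : 0 < L := by linarith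
  induction t with
  | zero =>
    refine heightForcesPath_of_le_one G w _ (Nat.ceil_le.2 ?_)
    simpa using inv_le_one_of_one_le₀ (one_le_pow₀ hL1)
  | succ t ih =>
    obtain hle | hgt := le_or_gt (A ^ (t + 1) / L ^ (2 * (t + 1 + 1))) 1
    · exact heightForcesPath_of_le_one G w _ (Nat.ceil_le.2 (by exact_mod_cast hle))
    have hLA : L ^ 2 ≤ A := by
      refine (lt_of_pow_lt_pow_left₀ (t + 1) hA.le ?_).le
      calc (L ^ 2) ^ (t + 1) ≤ L ^ (2 * (t + 1 + 1)) := by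
            rw [← pow_mul]
            gcongr
            exact t.le_succ
        _ < A ^ (t + 1) := (one_lt_div (pow_pos hL0 _)).1 hgt
    have hA1 : 1 ≤ A := (one_le_pow₀ hL1).trans hLA
    have hAlB : A * (A ^ t / L ^ (2 * (t + 1))) ≤ A ^ (t + 1) := by
      rw [← mul_div_assoc, ← pow_succ']
      exact div_le_self (by positivity) (one_le_pow₀ hL1)
    have hlength : A ^ (t + 1) / L ^ (2 * (t + 1 + 1)) =
        A * (A ^ t / L ^ (2 * (t + 1))) / L ^ 2 := by
      rw [mul_add_one 2 (t + 1), pow_add L, pow_succ' A t, ← mul_div_assoc, div_div]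
    rw [pow_succ', hlength]
    exact ih.amplify hw hL hLA (le_self_pow₀ hA1 t.succ_ne_zero) hAlB

end Amplification

section ScanningOrder

variable {N : ℕ} {G : SimpleGraph (Fin N)} {w : Sym2 (Fin N) → ℕ} {e f : Sym2 (Fin N)}

theorem mem_htList {o : Option (Sym2 (Fin N))} {k : ℕ} :
    o ∈ htList N G w k ↔ ∃ i < k, htEntry N G w i = o := by
  induction k with
  | zero => simp [htList]
  | succ k ih => 
    rw [htList, List.mem_append, ih, List.mem_singleton, eq_comm (a := o), Nat.exists_lt_succ_right]
    rfl

/-- The edges that compete for scanning position `k`: those containing its column vertex that have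
not been placed earlier. -/
def candidates (G : SimpleGraph (Fin N)) (w : Sym2 (Fin N) → ℕ) (hN : 0 < N) (k : ℕ) :
    Set (Sym2 (Fin N)) :=
  {e | e ∈ G.edgeSet ∧ (⟨k % N, Nat.mod_lt k hN⟩ : Fin N) ∈ e ∧ ∀ i < k, htEntry N G w i ≠ some e}

theorem htEntry_spec (hN : 0 < N) {k : ℕ} (h : htEntry N G w k = some e) :
    e ∈ candidates G w hN k ∧ ∀ f ∈ candidates G w hN k, w f ≤ w e := by
  unfold htEntry htPick at h
  rw [dif_pos hN] at h
  split_ifs at h with hmax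
  have hspec := hmax.choose_spec
  rw [Option.some.inj h] at hspec
  simpa only [mem_htList, not_exists, not_and] using! hspec

theorem exists_htEntry_eq_some (hN : 0 < N) {k : ℕ} (he : e ∈ candidates G w hN k) :
    ∃ f, htEntry N G w k = some f := by
  obtain ⟨m, hm, hmax⟩ :=
    Set.exists_max_image (candidates G w hN k) w (Set.toFinite _) ⟨e, he⟩
  unfold htEntry htPick
  rw [dif_pos hN, dif_pos ⟨m, by simpa only [mem_htList, not_exists, not_and] using! ⟨hm, hmax⟩⟩]
  exact ⟨_, rfl⟩

theorem htEntry_inj (hN : 0 < N) {i j : ℕ} (hi : htEntry N G w i = some e)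
    (hj : htEntry N G w j = some e) : i = j := by
  rcases lt_trichotomy i j with h | h | h
  · exact absurd hi ((htEntry_spec hN hj).1.2.2 i h)
  · exact h
  · exact absurd hj ((htEntry_spec hN hi).1.2.2 j h)

theorem mk_add_mul_mod (v : Fin N) (i : ℕ) (h : (v + i * N) % N < N) :
    (⟨(v + i * N) % N, h⟩ : Fin N) = v :=
  Fin.ext (by simp [Nat.mod_eq_of_lt v.2])

/-- Otherwise every position in the column of an end of `e` would be occupied. -/
theorem exists_htEntry_eq_some_of_mem_edgeSet (hN : 0 < N) (he : e ∈ G.edgeSet) :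
    ∃ k, htEntry N G w k = some e := by
  by_contra! hunplaced
  obtain ⟨v, hv⟩ : ∃ v, v ∈ e := ⟨_, e.out_fst_mem⟩
  have hfull : ∀ i : ℕ, ∃ f, htEntry N G w (v + i * N) = some f := fun i =>
    exists_htEntry_eq_some hN ⟨he, by rwa [mk_add_mul_mod], fun i _ => hunplaced i⟩
  choose f hf using hfull
  refine not_injective_infinite_finite f fun i j hij => ?_
  have := htEntry_inj hN (hf i) (hij ▸ hf j)
  exact Nat.eq_of_mul_eq_mul_right hN (by omega)

theorem htEntry_htIndex (hN : 0 < N) (he : e ∈ G.edgeSet) :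
    htEntry N G w (htIndex N G w e) = some e := by
  have hplaced := exists_htEntry_eq_some_of_mem_edgeSet (w := w) hN he
  rw [htIndex, dif_pos hplaced]
  exact Nat.find_spec hplaced

theorem htIndex_eq (hN : 0 < N) {k : ℕ} (h : htEntry N G w k = some e) :
    htIndex N G w e = k :=
  htEntry_inj hN (htEntry_htIndex hN (htEntry_spec hN h).1.1) h

theorem exists_htIndex_eq_of_lt_div (hN : 0 < N) (hw : Function.Injective w) (he : e ∈ G.edgeSet)
    {v : Fin N} (hv : v ∈ e) {i : ℕ} (hi : i < htIndex N G w e / N) :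
    ∃ f ∈ G.edgeSet, htIndex N G w f = v + i * N ∧ w e < w f := by
  have hlt : v + i * N < htIndex N G w e := by
    calc v + i * N < N + i * N := by gcongr; exact v.2
      _ = (i + 1) * N := by ring
      _ ≤ htIndex N G w e := (Nat.le_div_iff_mul_le hN).1 hi
  have hcand : e ∈ candidates G w hN (v + i * N) := ⟨he, by rwa [mk_add_mul_mod], fun j hj =>
    (htEntry_spec hN (htEntry_htIndex hN he)).1.2.2 j (hj.trans hlt)⟩
  obtain ⟨f, hf⟩ := exists_htEntry_eq_some hN hcand
  obtain ⟨hfcand, hmax⟩ := htEntry_spec hN hf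
  have hne : e ≠ f := fun h => hlt.ne' (htIndex_eq hN (h ▸ hf))
  exact ⟨f, hfcand.1, htIndex_eq hN hf, (hmax e hcand).lt_of_ne (hw.ne hne)⟩

/-- The height table of the ordered graph `(G, w)`, with `height` shifted to start from `0`. -/
noncomputable def heightTable (G : SimpleGraph (Fin N)) (hN : 0 < N) (hw : Function.Injective w) :
    HeightTable w G.edgeFinset where
  row e := htIndex N G w e / N
  col := colV N hN G w
  col_mem e he :=
    (htEntry_spec hN (htEntry_htIndex hN (mem_edgeFinset.1 he))).1.2.1
  injOn := by
    intro e he f hf hef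
    simp only [colV, Prod.mk.injEq, Fin.mk.injEq] at hef
    have hindex : htIndex N G w e = htIndex N G w f := by
      rw [← Nat.div_add_mod (htIndex N G w e) N, hef.1, hef.2, Nat.div_add_mod]
    have he' := htEntry_htIndex (w := w) hN (mem_edgeFinset.1 he)
    rw [hindex, htEntry_htIndex hN (mem_edgeFinset.1 hf)] at he'
    exact (Option.some.inj he').symm
  exists_lt e he v hv i hi := by
    obtain ⟨f, hf, hindex, hlt⟩ := exists_htIndex_eq_of_lt_div hN hw (mem_edgeFinset.1 he) hv hi
    refine ⟨f, mem_edgeFinset.2 hf, ?_, ?_, hlt⟩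
    · rw [hindex, Nat.add_mul_div_right _ _ hN, Nat.div_eq_of_lt v.2, zero_add]
    · simp only [colV, hindex, mk_add_mul_mod]

end ScanningOrder

theorem eight_mul_log_add_one_le {n : ℕ} (hn : 2 ≤ n) :
    8 * ((Nat.log 2 n : ℝ) + 1) ≤ 70 * Real.logb 2 n := by
  have hlog : (Nat.log 2 n : ℝ) ≤ Real.logb 2 n := Real.natLog_le_logb n 2
  have hlog_one : 1 ≤ Real.logb 2 n := by
    rw [Real.le_logb_iff_rpow_le one_lt_two (by positivity), Real.rpow_one]
    exact_mod_cast hn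
  linarith

theorem rpow_one_div_succ_pow {a : ℝ} (ha : 0 ≤ a) (t : ℕ) :
    (a ^ (1 / ((t + 1 : ℕ) : ℝ))) ^ t = a ^ (1 - 1 / ((t + 1 : ℕ) : ℝ)) := by
  rw [← Real.rpow_mul_natCast ha]
  congr 1
  push_cast
  field_simp
  ring

end EO

/-- Theorem 4.1.  Let `t ≥ 1` be an integer, `G` an ordered graph on
`n ≥ 2` vertices, `a > 0` a real number, and `e ∈ E(G)` an edge of height `h(e, G) > a`.
Then there is an increasing path `P` in `G` starting with the edge `e`, of length at least
`a^(1 − 1/t) / (70·log₂ n)^(2t)`, all of whose edges `f` satisfy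
`h(f, G) ≥ h(e, G) − a`. -/
theorem stmt16 (t : ℕ) (ht : 1 ≤ t) (N : ℕ) (hN : 2 ≤ N) (G : SimpleGraph (Fin N))
    (wt : Sym2 (Fin N) → ℕ) (hw : Function.Injective wt)
    (a : ℝ) (ha : 0 < a) (e : Sym2 (Fin N)) (he : e ∈ G.edgeSet)
    (hhe : a < (EO.height N G wt e : ℝ)) :
    ∃ (u v : Fin N) (P : G.Walk u v), P.IsPath ∧ EO.Increasing wt P.edges ∧
      P.edges.head? = some e ∧
      a ^ ((1 : ℝ) - 1 / (t : ℝ)) / (70 * Real.logb 2 (N : ℝ)) ^ (2 * t)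
        ≤ (P.length : ℝ) ∧
      ∀ f ∈ P.edges, (EO.height N G wt e : ℝ) - a ≤ (EO.height N G wt f : ℝ) := by
  obtain ⟨t, rfl⟩ : ∃ s, t = s + 1 := ⟨t - 1, by omega⟩
  have hforces := EO.heightForcesPath_floor_pow G hw (Real.rpow_pos_of_pos ha (1 / (t + 1 : ℕ)))
    (by simpa using EO.eight_mul_log_add_one_le hN) t
  rw [one_div, Real.rpow_inv_natCast_pow ha.le t.succ_ne_zero, ← one_div,
    EO.rpow_one_div_succ_pow ha.le] at hforces
  have hrow : ⌊a⌋₊ ≤ EO.htIndex N G wt e / N :=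
    Nat.lt_succ_iff.1 ((Nat.floor_lt ha.le).2 hhe)
  obtain ⟨u, v, P, hP, hhead, hlength, hrows⟩ :=
    hforces.exists_path_row_le_add (EO.heightTable G (by omega) hw) (by simp)
      (SimpleGraph.mem_edgeFinset.2 he) hrow
  refine ⟨u, v, P, hP.isPath, hP.pairwise_lt.isChain, hhead, Nat.ceil_le.1 hlength,
    fun f hf => ?_⟩
  have hheight : (EO.height N G wt e : ℝ) ≤ EO.height N G wt f + ⌊a⌋₊ := by
    exact_mod_cast (Nat.succ_le_succ (hrows f hf)).trans_eq (Nat.succ_add _ _).symm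
  linarith [Nat.floor_le ha.le]
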